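/- arXiv:1710.09891 — 2 statements merged into one kernel-verified Lean document; each statement's English description precedes it below -/
import Mathlib

section
/- Let f(k) = ⌈1.1 · ln(2.5·k)⌉. Then for every integer k ≥ 5, the inequality |(log p_{f(k)+k−3})² − log p_{f(k)+k−3}| < (k+1)·(f(k)+1) − p_{f(k)+k−3} holds, where p_m denotes the m-th prime number (p_1 = 2, p_2 = 3, …) and log denotes the base-10 logarithm. -/
/-- `nthPrime m` is the `m`-th prime, with `nthPrime 1 = 2`. -/
noncomputable def nthPrime (m : ℕ) : ℕ := Nat.nth Nat.Prime (m - 1)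

/-- `f k = ⌈1.1 · ln(2.5k)⌉` (a positive integer for `k ≥ 1`), as a natural number. -/
noncomputable def f (k : ℕ) : ℕ := (⌈(1.1 : ℝ) * Real.log (2.5 * k)⌉ : ℤ).toNat

/-!
Write `F = f k` and `p = nthPrime (F + k - 3)`. Since `k ≤ 3 ^ F`, the prime `p` has at most `F`
digits, so `|(log p)² - log p| < F²`, and it suffices to find `Y` with
`Y + F² ≤ (k + 1) * (F + 1)` and `k + F ≤ π Y + 3`.

For large `k` the choice is `Y = (F + 1) * (k - F)`, and `π Y` is bounded from below by Chebyshev's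
method. If `∑ a ∈ S, ⌊m / a⌋ - ∑ b ∈ T, ⌊m / b⌋ ≤ 1` for all `m`, then the logarithm of the
factorial ratio `∏ a ∈ S, ⌊N / a⌋! / ∏ b ∈ T, ⌊N / b⌋!` is at most `ψ N`, while Stirling's formula
evaluates it as `(∑ b ∈ T, log b / b - ∑ a ∈ S, log a / a) * N + O(log N)`. A ratio with constant
above `0.9404` gives `θ x ≥ 0.9404 * x - 5 * √x`. In the partial summation from `θ` to `π` the term
`x / (log x)²` has to be kept, since `x / log x` alone is too small for moderate `k`. For small `k`
the primes are counted.
-/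

open Finset ArithmeticFunction Chebyshev
open scoped Nat.Prime

/-! ### Lower bounds for `ψ` from factorial ratios -/

lemma log_factorial_eq_sum_vonMangoldt (N : ℕ) :
    Real.log N.factorial = ∑ n ∈ Ioc 0 N, Λ n * (N / n : ℕ) := by
  rw [← sum_Ioc_mul_zeta_eq_sum, vonMangoldt_mul_zeta]
  induction N with
  | zero => simp
  | succ n ih =>
    rw [sum_Ioc_succ_top n.zero_le, ← ih, Nat.factorial_succ, Nat.cast_mul,
      Real.log_mul (by positivity) (by positivity), add_comm, log_apply]

lemma log_factorial_div_eq_sum_vonMangoldt (N d : ℕ) :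
    Real.log (N / d).factorial = ∑ n ∈ Ioc 0 N, Λ n * (N / n / d : ℕ) := by
  rw [log_factorial_eq_sum_vonMangoldt]
  simp only [Nat.div_right_comm N _ d]
  refine sum_subset (Ioc_subset_Ioc_right (Nat.div_le_self N d)) fun n hn hn' ↦ ?_
  have hlt : N / d < n := by simp only [mem_Ioc] at hn hn'; omega
  rw [Nat.div_eq_of_lt hlt, Nat.cast_zero, mul_zero]

lemma log_factorial_mem_Icc {M : ℕ} (hM : 1 ≤ M) :
    Real.log M.factorial ∈
      Set.Icc (M * Real.log M - M + 1) (M * Real.log M - M + 1 + Real.log M) := by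
  induction M, hM using Nat.le_induction with
  | base => simp
  | succ n hn ih =>
    have hn0 : (0 : ℝ) < n := by exact_mod_cast hn
    have hn1 : (0 : ℝ) < n + 1 := by positivity
    have upper : n * (Real.log (n + 1) - Real.log n) ≤ 1 := by
      have := Real.log_le_sub_one_of_pos (div_pos hn1 hn0)
      rw [Real.log_div hn1.ne' hn0.ne', div_sub_one hn0.ne', le_div_iff₀ hn0] at this
      linarith
    have lower : 1 ≤ (n + 1) * (Real.log (n + 1) - Real.log n) := by
      have := Real.one_sub_inv_le_log_of_pos (div_pos hn1 hn0)
      rw [Real.log_div hn1.ne' hn0.ne', inv_div, one_sub_div hn1.ne', div_le_iff₀ hn1] at this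
      linarith
    rw [Nat.factorial_succ, Nat.cast_mul, Real.log_mul (by positivity) (by positivity)]
    push_cast
    exact ⟨by linarith [ih.1], by linarith [ih.2]⟩

lemma abs_log_factorial_floor_sub_le {y : ℝ} (hy : 1 ≤ y) :
    |Real.log ⌊y⌋₊.factorial - (y * Real.log y - y + 1)| ≤ Real.log y := by
  have hM1 : 1 ≤ ⌊y⌋₊ := Nat.one_le_floor_iff y |>.2 hy
  obtain ⟨lower, upper⟩ := log_factorial_mem_Icc hM1
  have hMy : (⌊y⌋₊ : ℝ) ≤ y := Nat.floor_le (by linarith)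
  have hyM : y < ⌊y⌋₊ + 1 := Nat.lt_floor_add_one y
  generalize ⌊y⌋₊ = M at *
  have hM0 : (1 : ℝ) ≤ M := by exact_mod_cast hM1
  have hy0 : 0 < y := by linarith
  have hlog : Real.log M ≤ Real.log y := Real.log_le_log (by linarith) hMy
  have : 0 ≤ Real.log M := Real.log_nonneg hM0
  have below : M * (Real.log y - Real.log M) ≤ y - M := by
    have := Real.log_le_sub_one_of_pos (x := y / M) (by positivity)
    rw [Real.log_div hy0.ne' (by positivity), div_sub_one (by positivity),
      le_div_iff₀ (by positivity)] at this
    linarith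
  have above : y - M ≤ y * (Real.log y - Real.log M) := by
    have := Real.one_sub_inv_le_log_of_pos (x := y / M) (by positivity)
    rw [Real.log_div hy0.ne' (by positivity), inv_div, one_sub_div hy0.ne',
      div_le_iff₀ hy0] at this
    linarith
  rw [abs_le]
  exact ⟨by nlinarith, by nlinarith⟩

section FactorialRatio

variable {S T : Finset ℕ}

lemma sum_log_factorial_div_sub_le_psi (h : ∀ m, ∑ a ∈ S, m / a ≤ ∑ b ∈ T, m / b + 1) (N : ℕ) :
    ∑ a ∈ S, Real.log (N / a).factorial - ∑ b ∈ T, Real.log (N / b).factorial ≤ ψ N := by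
  simp only [log_factorial_div_eq_sum_vonMangoldt]
  rw [sum_comm, sum_comm (s := T), ← sum_sub_distrib, psi, Nat.floor_natCast]
  refine sum_le_sum fun n _ ↦ ?_
  have hn : ∑ a ∈ S, ((N / n / a : ℕ) : ℝ) ≤ ∑ b ∈ T, ((N / n / b : ℕ) : ℝ) + 1 := by
    exact_mod_cast h (N / n)
  rw [← mul_sum, ← mul_sum, ← mul_sub]
  exact mul_le_of_le_one_right vonMangoldt_nonneg (by linarith)

lemma sum_div_add_mul_period {L : ℕ} (hS : ∀ a ∈ S, a ∣ L) (hL : 0 < L) (q r : ℕ) :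
    ∑ a ∈ S, (r + L * q) / a = ∑ a ∈ S, r / a + (∑ a ∈ S, L / a) * q := by
  rw [sum_mul, ← sum_add_distrib]
  refine sum_congr rfl fun a ha ↦ ?_
  obtain ⟨c, rfl⟩ := hS a ha
  have ha0 : 0 < a := Nat.pos_of_mul_pos_right hL
  rw [mul_assoc, Nat.add_mul_div_left _ _ ha0, Nat.mul_div_cancel_left _ ha0]

lemma sum_div_le_of_forall_lt_period {L : ℕ} (hL : 0 < L) (hS : ∀ a ∈ S, a ∣ L)
    (hT : ∀ b ∈ T, b ∣ L) (hST : ∑ a ∈ S, L / a = ∑ b ∈ T, L / b) {c : ℕ}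
    (h : ∀ r < L, ∑ a ∈ S, r / a ≤ ∑ b ∈ T, r / b + c) (m : ℕ) :
    ∑ a ∈ S, m / a ≤ ∑ b ∈ T, m / b + c := by
  rw [← Nat.mod_add_div m L, sum_div_add_mul_period hS hL, sum_div_add_mul_period hT hL, hST]
  linarith [h _ (Nat.mod_lt m hL)]

lemma abs_log_factorial_div_sub_le {N d : ℕ} (hd : 0 < d) (hN : d ≤ N) :
    |Real.log (N / d).factorial - ((Real.log N - 1) * N / d - N * (Real.log d / d) + 1)| ≤
      Real.log N := by
  have hd1 : (1 : ℝ) ≤ d := by exact_mod_cast hd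
  have hdN : (d : ℝ) ≤ N := by exact_mod_cast hN
  have hN0 : (0 : ℝ) < N := by linarith
  have h := abs_log_factorial_floor_sub_le ((one_le_div (by linarith)).2 hdN)
  rw [Nat.floor_div_eq_div, Real.log_div hN0.ne' (by positivity)] at h
  calc _ = _ := by congr 2; ring
    _ ≤ Real.log N - Real.log d := h
    _ ≤ Real.log N := sub_le_self _ (Real.log_nonneg hd1)

lemma le_psi_of_sum_div_le (hS : ∀ a ∈ S, 0 < a) (hT : ∀ b ∈ T, 0 < b)
    (hST : ∑ a ∈ S, (a : ℝ)⁻¹ = ∑ b ∈ T, (b : ℝ)⁻¹)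
    (h : ∀ m, ∑ a ∈ S, m / a ≤ ∑ b ∈ T, m / b + 1) {N : ℕ} (hSN : ∀ a ∈ S, a ≤ N)
    (hTN : ∀ b ∈ T, b ≤ N) :
    (∑ b ∈ T, Real.log b / b - ∑ a ∈ S, Real.log a / a) * N + (#S - #T) -
      (#S + #T) * Real.log N ≤ ψ N := by
  have lower := sum_le_sum fun a ha ↦
    (abs_le.1 (abs_log_factorial_div_sub_le (hS a ha) (hSN a ha))).1
  have upper := sum_le_sum fun b hb ↦
    (abs_le.1 (abs_log_factorial_div_sub_le (hT b hb) (hTN b hb))).2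
  simp only [div_eq_mul_inv _ (Nat.cast _), sum_sub_distrib, sum_add_distrib, ← mul_sum, sum_const,
    nsmul_eq_mul, mul_one] at lower upper ⊢
  rw [hST] at lower
  linarith [sum_log_factorial_div_sub_le_psi h N]

end FactorialRatio

/-- The set `S` of a factorial ratio `∏ a ∈ S, (N / a)! / ∏ b ∈ T, (N / b)!` used to bound `ψ` from
below, with `T = denominatorDivisors`. Both sets were found by linear programming over the divisors
of `2520`: they keep `∑ a ∈ S, m / a - ∑ b ∈ T, m / b` at most `1` while bringing
`∑ b ∈ T, log b / b - ∑ a ∈ S, log a / a` close to `1`. -/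
def numeratorDivisors : Finset ℕ :=
  {1, 6, 14, 20, 24, 35, 36, 56, 84, 126, 210, 280, 360, 504, 2520}

/-- The set `T` of the factorial ratio described at `numeratorDivisors`. -/
def denominatorDivisors : Finset ℕ := {2, 3, 5, 7, 12, 18, 28, 40, 42, 70, 72, 180, 252}

lemma sum_numeratorDivisors_div_le (m : ℕ) :
    ∑ a ∈ numeratorDivisors, m / a ≤ ∑ b ∈ denominatorDivisors, m / b + 1 :=
  sum_div_le_of_forall_lt_period (L := 2520) (by decide) (by decide) (by decide) (by decide)
    (by decide +kernel) m

lemma two_pow_mul_prod_numeratorDivisors_le :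
    2 ^ 3419 * ∏ a ∈ numeratorDivisors, a ^ (2520 / a) ≤
      ∏ b ∈ denominatorDivisors, b ^ (2520 / b) := by
  decide +kernel

lemma lt_sum_log_div_sub_sum_log_div :
    0.9404 < ∑ b ∈ denominatorDivisors, Real.log b / b -
      ∑ a ∈ numeratorDivisors, Real.log a / a := by
  have sum_log_div {U : Finset ℕ} (hU : ∀ u ∈ U, u ∣ 2520) :
      ∑ u ∈ U, Real.log u / u = Real.log (∏ u ∈ U, u ^ (2520 / u) : ℕ) / 2520 := by
    have hU0 (u : ℕ) (hu : u ∈ U) : (u : ℝ) ≠ 0 :=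
      Nat.cast_ne_zero.2 (ne_zero_of_dvd_ne_zero (by norm_num) (hU u hu))
    rw [Nat.cast_prod, Real.log_prod fun u hu ↦ by
      rw [Nat.cast_pow]; exact pow_ne_zero _ (hU0 u hu), sum_div]
    refine sum_congr rfl fun u hu ↦ ?_
    rw [Nat.cast_pow, Real.log_pow, Nat.cast_div (hU u hu) (hU0 u hu), Nat.cast_ofNat]
    ring
  rw [sum_log_div (by decide), sum_log_div (by decide), ← sub_div]
  have hle : ((2 ^ 3419 * ∏ a ∈ numeratorDivisors, a ^ (2520 / a) : ℕ) : ℝ) ≤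
      (∏ b ∈ denominatorDivisors, b ^ (2520 / b) : ℕ) :=
    Nat.cast_le.2 two_pow_mul_prod_numeratorDivisors_le
  have hpos : ∏ a ∈ numeratorDivisors, a ^ (2520 / a) ≠ 0 := by decide +kernel
  generalize ∏ a ∈ numeratorDivisors, a ^ (2520 / a) = P at *
  generalize ∏ b ∈ denominatorDivisors, b ^ (2520 / b) = Q at *
  have hlog := Real.log_le_log (by positivity) hle
  rw [Nat.cast_mul, Real.log_mul (by positivity) (by positivity), Nat.cast_pow, Real.log_pow,
    Nat.cast_ofNat, Nat.cast_ofNat] at hlog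
  linarith [Real.log_two_gt_d9]

lemma le_psi_natCast {N : ℕ} (hN : 2520 ≤ N) : 0.9404 * N - 28 * Real.log N ≤ ψ N := by
  have hS : ∀ a ∈ numeratorDivisors, 0 < a ∧ a ≤ 2520 := by decide
  have hT : ∀ b ∈ denominatorDivisors, 0 < b ∧ b ≤ 2520 := by decide
  have h := le_psi_of_sum_div_le (fun a ha ↦ (hS a ha).1) (fun b hb ↦ (hT b hb).1)
    (by norm_num [numeratorDivisors, denominatorDivisors]) sum_numeratorDivisors_div_le
    (fun a ha ↦ (hS a ha).2.trans hN) (fun b hb ↦ (hT b hb).2.trans hN)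
  rw [show #numeratorDivisors = 15 by decide, show #denominatorDivisors = 13 by decide] at h
  have := mul_le_mul_of_nonneg_right lt_sum_log_div_sub_sum_log_div.le N.cast_nonneg
  push_cast at h
  linarith

/-! ### Lower bounds for `θ` and `π` -/

lemma log_le_div_add_log_sub_one {x t : ℝ} (hx : 0 < x) (ht : 0 < t) :
    Real.log x ≤ x / t + Real.log t - 1 := by
  have h := Real.log_le_sub_one_of_pos (div_pos hx ht)
  rw [Real.log_div hx.ne' ht.ne'] at h
  linarith

lemma psi_le_log_four_add_mul_self {x : ℝ} (hx : 1 ≤ x) :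
    ψ x ≤ (Real.log 4 + 4 / Real.exp 1) * x := by
  have hlog : Real.log √x ≤ √x / Real.exp 1 := by
    simpa using log_le_div_add_log_sub_one (Real.sqrt_pos.2 (by linarith)) (Real.exp_pos 1)
  calc ψ x ≤ Real.log 4 * x + 4 * √x * Real.log √x := by
        rw [Real.log_sqrt (by linarith)]
        linarith [psi_le hx]
    _ ≤ Real.log 4 * x + 4 * √x * (√x / Real.exp 1) := by gcongr
    _ = (Real.log 4 + 4 / Real.exp 1) * x := by
        linear_combination (4 / Real.exp 1) * Real.mul_self_sqrt (show 0 ≤ x by linarith)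

lemma psi_le_mul_self {x : ℝ} (hx : 1 ≤ x) : ψ x ≤ 2.86 * x := by
  refine (psi_le_log_four_add_mul_self hx).trans ?_
  have hlog4 : Real.log 4 = 2 * Real.log 2 := by
    rw [show (4 : ℝ) = 2 ^ 2 by norm_num, Real.log_pow, Nat.cast_ofNat]
  have hexp : 4 / Real.exp 1 ≤ 4 / 2.718 := by
    gcongr
    linarith [Real.exp_one_gt_d9]
  gcongr
  rw [hlog4]
  norm_num at hexp ⊢
  linarith [Real.log_two_lt_d9]

lemma pow_mul_rpow_inv_le_sqrt {c x : ℝ} {n : ℕ} (hn : 2 ≤ n) (hc : 0 ≤ c)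
    (hx : c ^ (2 * n) ≤ x) : c ^ (n - 2) * x ^ (n : ℝ)⁻¹ ≤ √x := by
  have hx0 : 0 ≤ x := (by positivity : 0 ≤ c ^ (2 * n)).trans hx
  have hn0 : (n : ℝ) ≠ 0 := by positivity
  have hcr : c ≤ x ^ ((2 * n : ℕ) : ℝ)⁻¹ := by
    rw [← Real.pow_rpow_inv_natCast hc (by omega : 2 * n ≠ 0)]
    gcongr
  calc c ^ (n - 2) * x ^ (n : ℝ)⁻¹
      = c ^ (n - 2) * (x ^ ((2 * n : ℕ) : ℝ)⁻¹) ^ 2 := by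
        rw [← Real.rpow_mul_natCast hx0]
        congr 2
        push_cast
        field_simp
    _ ≤ (x ^ ((2 * n : ℕ) : ℝ)⁻¹) ^ (n - 2) * (x ^ ((2 * n : ℕ) : ℝ)⁻¹) ^ 2 := by gcongr
    _ = √x := by
        rw [← pow_add, Nat.sub_add_cancel hn, ← Real.rpow_mul_natCast hx0, Real.sqrt_eq_rpow]
        congr 1
        push_cast
        field_simp

lemma psi_sub_theta_le_mul_sqrt {x : ℝ} (hx : 50000 ≤ x) : ψ x - θ x ≤ 3.46 * √x := by
  have hroot {r : ℝ} (hr : 0 ≤ r) : ψ (x ^ r) ≤ 2.86 * x ^ r :=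
    psi_le_mul_self (Real.one_le_rpow (by linarith) hr)
  have hsquare : x ^ (2 : ℝ)⁻¹ = √x := by rw [Real.sqrt_eq_rpow, one_div]
  have hcube : 6 * x ^ (3 : ℝ)⁻¹ ≤ √x := by
    simpa using pow_mul_rpow_inv_le_sqrt (n := 3) (c := 6) (by norm_num) (by norm_num)
      (le_trans (by norm_num) hx)
  have hfifth : 2.9 ^ 3 * x ^ (5 : ℝ)⁻¹ ≤ √x := by
    simpa using pow_mul_rpow_inv_le_sqrt (n := 5) (c := 2.9) (by norm_num) (by norm_num)
      (le_trans (by norm_num) hx)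
  calc ψ x - θ x
      ≤ ψ (x ^ (2 : ℝ)⁻¹) + ψ (x ^ (3 : ℝ)⁻¹) + ψ (x ^ (5 : ℝ)⁻¹) :=
        psi_sub_theta_le_psi_add_psi_add_psi x
    _ ≤ 2.86 * √x + 2.86 * x ^ (3 : ℝ)⁻¹ + 2.86 * x ^ (5 : ℝ)⁻¹ := by
        rw [← hsquare]
        gcongr <;> exact hroot (by norm_num)
    _ ≤ 3.46 * √x := by linarith [Real.sqrt_nonneg x]

lemma sub_mul_sqrt_le_theta {x : ℝ} (hx : 50000 ≤ x) : 0.9404 * x - 5 * √x ≤ θ x := by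
  have hx0 : 0 < x := by linarith
  have hfloor := Nat.lt_floor_add_one x
  have hpsi := le_psi_natCast (N := ⌊x⌋₊) (Nat.le_floor (by norm_num; linarith))
  rw [← psi_eq_psi_coe_floor] at hpsi
  have hlogfloor : Real.log ⌊x⌋₊ ≤ 2 * Real.log √x := by
    rw [Real.log_sqrt hx0.le, mul_div_cancel₀ _ two_ne_zero]
    exact Real.log_le_log (by linarith) (Nat.floor_le hx0.le)
  have hlog := log_le_div_add_log_sub_one (Real.sqrt_pos.2 hx0) (by norm_num : (0 : ℝ) < 2 ^ 8)
  rw [Real.log_pow] at hlog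
  have hsqrt : 223 ≤ √x := Real.le_sqrt_of_sq_le (by linarith)
  push_cast at hlog
  linarith [psi_sub_theta_le_mul_sqrt hx, Real.log_two_lt_d9]

lemma mul_le_theta {A X t : ℝ} (hX : 50000 ≤ X) (hA : A ≤ 0.9404)
    (hAX : 5 ^ 2 ≤ (0.9404 - A) ^ 2 * X) (ht : X ≤ t) : A * t ≤ θ t := by
  have ht0 : 0 ≤ t := by linarith
  have hAt : 5 ≤ (0.9404 - A) * √t := by
    refine le_of_sq_le_sq ?_ (mul_nonneg (by linarith) (Real.sqrt_nonneg t))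
    rw [mul_pow, Real.sq_sqrt ht0]
    exact hAX.trans (by gcongr)
  calc A * t = 0.9404 * t - (0.9404 - A) * √t * √t := by
        linear_combination (0.9404 - A) * Real.mul_self_sqrt ht0
    _ ≤ 0.9404 * t - 5 * √t := by gcongr
    _ ≤ θ t := sub_mul_sqrt_le_theta (hX.trans ht)

lemma mul_div_sq_log_le_integral_theta {A X x : ℝ} (hX : 2 ≤ X) (hXx : X ≤ x) (hA : 0 ≤ A)
    (hθ : ∀ t, X ≤ t → A * t ≤ θ t) :
    A * ((x - X) / Real.log x ^ 2) ≤ ∫ t in 2..x, θ t / (t * Real.log t ^ 2) := by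
  have hint : IntervalIntegrable (fun t ↦ θ t / (t * Real.log t ^ 2)) MeasureTheory.volume 2 x :=
    (intervalIntegrable_iff_integrableOn_Icc_of_le (hX.trans hXx)).2
      (integrableOn_theta_div_id_mul_log_sq x)
  have hint₁ := hint.mono_set (Set.uIcc_subset_uIcc_left (Set.mem_uIcc_of_le hX hXx))
  have hint₂ := hint.mono_set (Set.uIcc_subset_uIcc_right (Set.mem_uIcc_of_le hX hXx))
  rw [← intervalIntegral.integral_add_adjacent_intervals hint₁ hint₂]
  have hinitial : 0 ≤ ∫ t in 2..X, θ t / (t * Real.log t ^ 2) :=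
    intervalIntegral.integral_nonneg hX fun t ht ↦
      div_nonneg (theta_nonneg t) (mul_nonneg (by linarith [ht.1]) (sq_nonneg _))
  have hfinal : A * ((x - X) / Real.log x ^ 2) ≤ ∫ t in X..x, θ t / (t * Real.log t ^ 2) := by
    calc A * ((x - X) / Real.log x ^ 2) = ∫ _ in X..x, A / Real.log x ^ 2 := by
          rw [intervalIntegral.integral_const, smul_eq_mul]; ring
      _ ≤ _ := intervalIntegral.integral_mono_on hXx (by simp) hint₂ fun t ht ↦ ?_
    have ht0 : 0 < t := by linarith [ht.1]
    have hlogt : 0 < Real.log t := Real.log_pos (by linarith [ht.1])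
    calc A / Real.log x ^ 2 ≤ A / Real.log t ^ 2 := by gcongr; exact ht.2
      _ = A * t / (t * Real.log t ^ 2) := by field_simp
      _ ≤ θ t / (t * Real.log t ^ 2) := by gcongr; exact hθ t ht.1
  linarith

lemma mul_le_primeCounting_floor {A X x : ℝ} (hX : 2 ≤ X) (hXx : X ≤ x) (hA : 0 ≤ A)
    (hθ : ∀ t, X ≤ t → A * t ≤ θ t) :
    A * (x / Real.log x + (x - X) / Real.log x ^ 2) ≤ π ⌊x⌋₊ := by
  rw [primeCounting_eq_theta_div_log_add_integral (hX.trans hXx), mul_add, ← mul_div_assoc]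
  have hlog : 0 ≤ Real.log x := Real.log_nonneg (by linarith)
  gcongr
  · exact hθ x hXx
  · exact mul_div_sq_log_le_integral_theta hX hXx hA hθ

lemma mul_mul_div_sq_le_primeCounting_floor {A X x η l : ℝ} (hX : 2 ≤ X) (hA : 0 ≤ A)
    (hη : η ≤ 1) (hXη : X ≤ η * x) (hl : Real.log x ≤ l) (hθ : ∀ t, X ≤ t → A * t ≤ θ t)
    (hx : 0 < x) :
    A * (x * ((l + 1 - η) / l ^ 2)) ≤ π ⌊x⌋₊ := by
  have hXx : X ≤ x := hXη.trans (mul_le_of_le_one_left hx.le hη)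
  have hlog : 0 < Real.log x := Real.log_pos (by linarith)
  refine le_trans ?_ (mul_le_primeCounting_floor hX hXx hA hθ)
  have : 0 ≤ 1 - η := by linarith
  calc A * (x * ((l + 1 - η) / l ^ 2))
      = A * (x / l + (x - η * x) / l ^ 2) := by
        have := hlog.trans_le hl
        field_simp
        ring
    _ ≤ A * (x / Real.log x + (x - η * x) / Real.log x ^ 2) := by
        have : 0 ≤ x - η * x := by nlinarith
        gcongr
    _ ≤ A * (x / Real.log x + (x - X) / Real.log x ^ 2) := by gcongr

lemma add_le_primeCounting_mul_sub {A X η δ l : ℝ} {k F : ℕ} (hX : 2 ≤ X) (hA : 0 ≤ A)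
    (hη : 0 ≤ η) (hη' : η ≤ 1) (hδ : δ < 1) (hFk : F ≤ δ * k)
    (hXη : X ≤ η * ((F + 1) * ((1 - δ) * k))) (hl : Real.log ((F + 1) * k) ≤ l)
    (hmain : (1 + δ) * l ^ 2 ≤ (1 - δ) * (A * (F + 1) * (l + 1 - η)))
    (hθ : ∀ t, X ≤ t → A * t ≤ θ t) :
    k + F ≤ π ((F + 1) * (k - F)) := by
  have hk : (0 : ℝ) < k := Nat.cast_pos.2 <| Nat.pos_of_ne_zero fun hk ↦ by
    rw [hk, Nat.cast_zero, mul_zero, mul_zero, mul_zero] at hXη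
    linarith
  have hsub : (1 - δ) * k ≤ k - F := by linarith
  have hsub0 : 0 < (k : ℝ) - F := lt_of_lt_of_le (mul_pos (by linarith) hk) hsub
  have hFlek : F ≤ k := by exact_mod_cast (sub_pos.1 hsub0).le
  have hXy : X ≤ η * ((F + 1) * (k - F)) := hXη.trans (by gcongr)
  have hy1 : 1 < ((F + 1) * (k - F) : ℝ) := by
    nlinarith [mul_pos (by positivity : (0 : ℝ) < F + 1) hsub0]
  have hly : Real.log ((F + 1) * (k - F)) ≤ l :=
    (Real.log_le_log (by linarith) (by gcongr; linarith [Nat.cast_nonneg (α := ℝ) F])).trans hl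
  have hl0 : 0 < l := (Real.log_pos hy1).trans_le hly
  have hπ := mul_mul_div_sq_le_primeCounting_floor hX hA hη' hXy hly hθ (by linarith)
  have hfloor : ⌊((F + 1) * (k - F) : ℝ)⌋₊ = (F + 1) * (k - F) := by
    rw [← Nat.floor_natCast (R := ℝ) ((F + 1) * (k - F))]
    push_cast [Nat.cast_sub hFlek]
    rfl
  rw [hfloor] at hπ
  have hmain' : 1 + δ ≤ (1 - δ) * (A * (F + 1) * ((l + 1 - η) / l ^ 2)) := by
    rw [← mul_div_assoc, ← mul_div_assoc, le_div_iff₀ (by positivity)]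
    exact hmain
  have hfactor : 0 ≤ (l + 1 - η) / l ^ 2 := div_nonneg (by linarith) (sq_nonneg l)
  have : ((k + F : ℕ) : ℝ) ≤ π ((F + 1) * (k - F)) := by
    calc ((k + F : ℕ) : ℝ) ≤ (1 + δ) * k := by push_cast; linarith
      _ ≤ (1 - δ) * (A * (F + 1) * ((l + 1 - η) / l ^ 2)) * k := by gcongr
      _ = A * ((F + 1) * ((1 - δ) * k) * ((l + 1 - η) / l ^ 2)) := by ring
      _ ≤ A * ((F + 1) * (k - F) * ((l + 1 - η) / l ^ 2)) := by gcongr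
      _ ≤ π ((F + 1) * (k - F)) := hπ
  exact_mod_cast this

/-! ### The function `f` and large `k` -/

lemma f_eq_natCeil (k : ℕ) : f k = ⌈(1.1 : ℝ) * Real.log (2.5 * k)⌉₊ := Int.ceil_toNat _

lemma f_le_iff {k F : ℕ} (hk : 0 < k) : f k ≤ F ↔ (2.5 * k : ℝ) ^ 11 ≤ Real.exp 1 ^ (10 * F) := by
  have : (0 : ℝ) < k := by exact_mod_cast hk
  rw [f_eq_natCeil, Nat.ceil_le,
    ← Real.log_le_log_iff (x := (2.5 * k : ℝ) ^ 11) (by positivity) (by positivity),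
    Real.log_pow, Real.log_pow, Real.log_exp]
  push_cast
  constructor <;> intro h <;> linarith

lemma f_le_of_pow_le {k F : ℕ} (hk : 0 < k)
    (h : (5 * k) ^ 11 * (10 ^ 10) ^ (10 * F) ≤ 2 ^ 11 * 27182818283 ^ (10 * F)) : f k ≤ F := by
  have h' : (5 * k : ℝ) ^ 11 * (10 ^ 10) ^ (10 * F) ≤ 2 ^ 11 * 27182818283 ^ (10 * F) := by
    exact_mod_cast h
  refine (f_le_iff hk).2 ?_
  calc (2.5 * k : ℝ) ^ 11 = (5 * k) ^ 11 / 2 ^ 11 := by ring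
    _ ≤ 27182818283 ^ (10 * F) / (10 ^ 10) ^ (10 * F) := by
        rwa [div_le_div_iff₀ (by positivity) (by positivity), mul_comm (27182818283 ^ _)]
    _ = 2.7182818283 ^ (10 * F) := by rw [← div_pow]; norm_num
    _ ≤ Real.exp 1 ^ (10 * F) := by gcongr; exact Real.exp_one_gt_d9.le

lemma lt_f_of_lt_pow {k F : ℕ} (hk : 0 < k)
    (h : 2 ^ 11 * 27182818286 ^ (10 * F) < (5 * k) ^ 11 * (10 ^ 10) ^ (10 * F)) : F < f k := by
  have h' : (2 : ℝ) ^ 11 * 27182818286 ^ (10 * F) < (5 * k) ^ 11 * (10 ^ 10) ^ (10 * F) := by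
    exact_mod_cast h
  refine lt_of_not_ge fun hF ↦ ((f_le_iff hk).1 hF).not_gt ?_
  calc Real.exp 1 ^ (10 * F) ≤ 2.7182818286 ^ (10 * F) := by gcongr; exact Real.exp_one_lt_d9.le
    _ = 27182818286 ^ (10 * F) / (10 ^ 10) ^ (10 * F) := by rw [← div_pow]; norm_num
    _ < (5 * k) ^ 11 / 2 ^ 11 := by
        rwa [div_lt_div_iff₀ (by positivity) (by positivity), mul_comm (27182818286 ^ _)]
    _ = (2.5 * k : ℝ) ^ 11 := by ring

lemma f_mono {k m : ℕ} (hk : 0 < k) (hkm : k ≤ m) : f k ≤ f m :=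
  (f_le_iff hk).2 <| le_trans (by gcongr) ((f_le_iff (hk.trans_le hkm)).1 le_rfl)

lemma log_five_halves_mul_le (k : ℕ) : Real.log (2.5 * k) ≤ 10 / 11 * f k := by
  have h := Nat.le_ceil ((1.1 : ℝ) * Real.log (2.5 * k))
  rw [← f_eq_natCeil] at h
  linarith

lemma f_lt_log_add_one {k : ℕ} (hk : 0 < k) : f k < 1.1 * Real.log (2.5 * k) + 1 := by
  have hk1 : (1 : ℝ) ≤ k := by exact_mod_cast hk
  rw [f_eq_natCeil]
  exact Nat.ceil_lt_add_one (mul_nonneg (by norm_num) (Real.log_nonneg (by linarith)))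

lemma f_le_mul_div {k₀ k : ℕ} (hk₀ : 0 < k₀) (hk : k₀ ≤ k) (hf : 1 ≤ f k₀) :
    (f k : ℝ) ≤ (f k₀ + 1) / k₀ * k := by
  have hk₀' : (0 : ℝ) < k₀ := by exact_mod_cast hk₀
  have hk' : (k₀ : ℝ) ≤ k := by exact_mod_cast hk
  have hf' : (1 : ℝ) ≤ f k₀ := by exact_mod_cast hf
  have hlog := log_le_div_add_log_sub_one (x := 2.5 * k) (t := 2.5 * k₀) (by linarith) (by linarith)
  rw [mul_div_mul_left _ _ (by norm_num)] at hlog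
  have hratio : 1 ≤ (k : ℝ) / k₀ := (one_le_div hk₀').2 hk'
  have := f_lt_log_add_one (hk₀.trans_le hk)
  have := log_five_halves_mul_le k₀
  calc (f k : ℝ) ≤ f k₀ + 1 + 1.1 * (k / k₀ - 1) := by linarith
    _ ≤ (f k₀ + 1) * (k / k₀) := by nlinarith
    _ = (f k₀ + 1) / k₀ * k := by ring

lemma log_f_add_one_mul_le {k : ℕ} (hk : 0 < k) {u c : ℝ} (hu : 0 < u) (hc : Real.log u ≤ c) :
    Real.log ((f k + 1) * k) ≤ 10 / 11 * f k + 2 / 5 * (f k + 1) / u + c - 1 := by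
  have : (0 : ℝ) < k := by exact_mod_cast hk
  have hlog := log_five_halves_mul_le k
  have htangent := log_le_div_add_log_sub_one (x := 2 / 5 * ((f k : ℝ) + 1)) (by positivity) hu
  have hsplit : Real.log ((f k + 1) * k) = Real.log (2.5 * k) + Real.log (2 / 5 * (f k + 1)) := by
    rw [← Real.log_mul (by positivity) (by positivity)]
    congr 1
    ring
  linarith

lemma log_six_le : Real.log 6 ≤ 1.7918 := by
  rw [show (6 : ℝ) = 2 * 3 by norm_num, Real.log_mul (by norm_num) (by norm_num)]
  linarith [Real.log_two_lt_d9, Real.log_three_lt_d9]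

lemma log_sixteen_le : Real.log 16 ≤ 2.7726 := by
  rw [show (16 : ℝ) = 2 ^ 4 by norm_num, Real.log_pow]
  norm_num
  linarith [Real.log_two_lt_d9]

-- With `F = f k`, the parameters satisfy `A ≤ 0.9404 - 5 / √X`, `F / k ≤ δ` and
-- `X / ((F + 1) * (1 - δ) * k) ≤ η` throughout the range, and `u` is close to `2 / 5 * (F + 1)`.
lemma add_f_le_primeCounting_mul_sub_of_le_134723 {k : ℕ} (hk : 21869 ≤ k) (hk' : k ≤ 134723) :
    k + f k ≤ π ((f k + 1) * (k - f k)) := by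
  have hf : 12 < f k :=
    (lt_f_of_lt_pow (k := 21869) (by norm_num) (by norm_num)).trans_le (f_mono (by norm_num) hk)
  have hf' : f k ≤ 14 :=
    (f_mono (by linarith) hk').trans (f_le_of_pow_le (by norm_num) (by norm_num))
  have hkR : (21869 : ℝ) ≤ k := by exact_mod_cast hk
  have hl := log_f_add_one_mul_le (k := k) (by linarith) (u := 6) (by norm_num) log_six_le
  generalize f k = F at *
  refine add_le_primeCounting_mul_sub (X := 55000) (A := 0.919) (η := 0.1798) (δ := 0.000641)
    (by norm_num) (by norm_num) (by norm_num) (by norm_num) (by norm_num) ?_ ?_ hl ?_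
    (fun t ↦ mul_le_theta (by norm_num) (by norm_num) (by norm_num))
  all_goals interval_cases F <;> norm_num <;> linarith

lemma add_f_le_primeCounting_mul_sub_of_le_2060078 {k : ℕ} (hk : 134724 ≤ k) (hk' : k ≤ 2060078) :
    k + f k ≤ π ((f k + 1) * (k - f k)) := by
  have hf : 14 < f k :=
    (lt_f_of_lt_pow (k := 134724) (by norm_num) (by norm_num)).trans_le (f_mono (by norm_num) hk)
  have hf' : f k ≤ 17 :=
    (f_mono (by linarith) hk').trans (f_le_of_pow_le (by norm_num) (by norm_num))
  have hkR : (134724 : ℝ) ≤ k := by exact_mod_cast hk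
  have hl := log_f_add_one_mul_le (k := k) (by linarith) (u := 6) (by norm_num) log_six_le
  generalize f k = F at *
  refine add_le_primeCounting_mul_sub (X := 200000) (A := 0.9292) (η := 0.0929) (δ := 0.000127)
    (by norm_num) (by norm_num) (by norm_num) (by norm_num) (by norm_num) ?_ ?_ hl ?_
    (fun t ↦ mul_le_theta (by norm_num) (by norm_num) (by norm_num))
  all_goals interval_cases F <;> norm_num <;> linarith

-- The choice `u = 16` keeps the slope `10 / 11 + 2 / (5 * u)`
-- of the logarithm bound in `F` below `A`.
lemma add_f_le_primeCounting_mul_sub_of_ge {k : ℕ} (hk : 2060079 ≤ k) :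
    k + f k ≤ π ((f k + 1) * (k - f k)) := by
  have hf₀ : f 2060079 = 18 :=
    (f_le_of_pow_le (by norm_num) (by norm_num)).antisymm
      (lt_f_of_lt_pow (by norm_num) (by norm_num))
  have hf : (18 : ℝ) ≤ f k := by exact_mod_cast hf₀ ▸ f_mono (by norm_num) hk
  have hfk := f_le_mul_div (by norm_num) hk (by omega)
  have hkR : (2060079 : ℝ) ≤ k := by exact_mod_cast hk
  rw [hf₀] at hfk
  refine add_le_primeCounting_mul_sub (X := 1400000) (A := 0.9361) (η := 0.0358) (δ := 0.00001)
    (by norm_num) (by norm_num) (by norm_num) (by norm_num) (by norm_num) ?_ ?_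
    (log_f_add_one_mul_le (by linarith) (u := 16) (by norm_num) log_sixteen_le) ?_
    (fun t ↦ mul_le_theta (by norm_num) (by norm_num) (by norm_num))
  · norm_num at hfk ⊢
    linarith
  · nlinarith
  · obtain ⟨g, hg, hfg⟩ : ∃ g : ℝ, 0 ≤ g ∧ (f k : ℝ) = g + 18 := ⟨f k - 18, by linarith, by ring⟩
    rw [hfg]
    norm_num
    nlinarith [mul_nonneg hg hg]

lemma add_f_le_primeCounting_mul_sub {k : ℕ} (hk : 21869 ≤ k) :
    k + f k ≤ π ((f k + 1) * (k - f k)) := by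
  rcases le_or_gt k 134723 with h | h
  · exact add_f_le_primeCounting_mul_sub_of_le_134723 hk h
  rcases le_or_gt k 2060078 with h' | h'
  · exact add_f_le_primeCounting_mul_sub_of_le_2060078 h h'
  · exact add_f_le_primeCounting_mul_sub_of_ge h'

/-! ### Small `k` -/

/-- The number of `i ∈ [a, b)` with `2 * i + 1` coprime to `q`, provided that `b - a ≤ 2 ^ d`: the
interval is bisected `d` times, and a resulting interval counts at most `1`. The bisection keeps
the recursion shallow when the kernel evaluates it. -/
def oddCoprimeCount (q : ℕ) : ℕ → ℕ → ℕ → ℕ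
  | 0, a, b => bif a.beq b then 0 else (((2 * a + 1).gcd q).beq 1).toNat
  | d + 1, a, b => oddCoprimeCount q d a ((a + b) / 2) + oddCoprimeCount q d ((a + b) / 2) b

lemma primeCounting_add_one_le_of_prime {n : ℕ} (h : (n + 1).Prime) : π n + 1 ≤ π (n + 1) := by
  rw [Nat.primeCounting, Nat.primeCounting', Nat.primeCounting, Nat.primeCounting',
    Nat.count_succ _ (n + 1), if_pos h]

lemma primeCounting_two_mul_add_oddCoprimeCount_le {q a b : ℕ} (d : ℕ) (hab : a ≤ b)
    (hq : ∀ i, a ≤ i → i < b → (2 * i + 1).Coprime q → (2 * i + 1).Prime) :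
    π (2 * a) + oddCoprimeCount q d a b ≤ π (2 * b) := by
  induction d generalizing a b with
  | zero =>
    have hmono := Nat.monotone_primeCounting (show 2 * a ≤ 2 * b by omega)
    rw [oddCoprimeCount]
    rcases hbeq : a.beq b with _ | _
    · have hlt : a < b := hab.lt_of_ne (Nat.ne_of_beq_eq_false hbeq)
      rcases hgcd : ((2 * a + 1).gcd q).beq 1 with _ | _
      · exact hmono
      · have hprime := hq a le_rfl hlt (Nat.eq_of_beq_eq_true hgcd)
        exact (primeCounting_add_one_le_of_prime hprime).trans
          (Nat.monotone_primeCounting (by omega))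
    · exact hmono
  | succ d ih =>
    have hleft := ih (a := a) (b := (a + b) / 2) (by omega)
      fun i hai hib ↦ hq i hai (by omega)
    have hright := ih (a := (a + b) / 2) (b := b) (by omega)
      fun i hai hib ↦ hq i (by omega) hib
    rw [oddCoprimeCount]
    omega

lemma prime_of_coprime_factorial_sqrt {m n : ℕ} (hm : 2 ≤ m) (hmn : m ≤ n)
    (h : m.Coprime (Nat.sqrt n).factorial) : m.Prime := by
  by_contra hprime
  have hsq : m.minFac ^ 2 ≤ n := (Nat.minFac_sq_le_self (by omega) hprime).trans hmn
  exact ((Nat.coprime_factorial_iff (by omega)).1 h).not_ge (Nat.le_sqrt'.2 hsq)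

/-- A row `(F, b)` of a table covers an interval `[a, b]` on which `f = F`. With
`Y = (a + 1) * (F + 1) - F ^ 2`, rounded down to an even number `2 * m`, it has to satisfy
`b + F ≤ π Y + 3`, where `π Y` is estimated from the primes in `(2 * n, 2 * m)` and from a lower
bound `c` for `π (2 * n)` that comes from the preceding row. The check succeeds if the rows cover
`[a, K]`. -/
def checkTable (K : ℕ) : ℕ → ℕ → ℕ → List (ℕ × ℕ) → Bool
  | a, _, _, [] => decide (K < a)
  | a, n, c, (F, b) :: rows =>
    let m := ((a + 1) * (F + 1) - F ^ 2) / 2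
    decide (2 ^ 11 * 27182818286 ^ (10 * (F - 1)) < (5 * a) ^ 11 * (10 ^ 10) ^ (10 * (F - 1))) &&
      decide ((5 * b) ^ 11 * (10 ^ 10) ^ (10 * F) ≤ 2 ^ 11 * 27182818283 ^ (10 * F)) &&
      decide (n ≤ m) &&
      decide (b + F ≤ c + oddCoprimeCount (2 * m).sqrt.factorial ((m - n).log2 + 1) n m + 3) &&
      checkTable K (b + 1) m (b + F - 3) rows

lemma exists_le_primeCounting_of_checkTable {K a n c k : ℕ} {rows : List (ℕ × ℕ)}
    (h : checkTable K a n c rows = true) (ha : 0 < a) (hn : 0 < n) (hc : c ≤ π (2 * n))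
    (hak : a ≤ k) (hkK : k ≤ K) :
    ∃ Y, Y + f k ^ 2 ≤ (k + 1) * (f k + 1) ∧ k + f k ≤ π Y + 3 := by
  induction rows generalizing a n c with
  | nil =>
    rw [checkTable, decide_eq_true_eq] at h
    omega
  | cons row rows ih =>
    obtain ⟨F, b⟩ := row
    simp only [checkTable, Bool.and_eq_true, decide_eq_true_eq] at h
    obtain ⟨⟨⟨⟨hfa, hfb⟩, hnm⟩, hcount⟩, hrows⟩ := h
    set m := ((a + 1) * (F + 1) - F ^ 2) / 2
    have hπ := primeCounting_two_mul_add_oddCoprimeCount_le ((m - n).log2 + 1) hnm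
      fun i hni him ↦ prime_of_coprime_factorial_sqrt (n := 2 * m) (by omega) (by omega)
    rcases le_or_gt k b with hkb | hbk
    · have hf : f k = F := by
        have := (lt_f_of_lt_pow ha hfa).trans_le (f_mono ha hak)
        have := (f_mono (ha.trans_le hak) hkb).trans
          (f_le_of_pow_le (ha.trans_le (hak.trans hkb)) hfb)
        omega
      have hk : (a + 1) * (F + 1) ≤ (k + 1) * (F + 1) := Nat.mul_le_mul_right _ (by omega)
      exact ⟨2 * m, by rw [hf]; omega, by omega⟩
    · exact ih hrows b.succ_pos (hn.trans_le hnm) (by omega) hbk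

lemma exists_le_primeCounting_of_le_21868 {k : ℕ} (hk : 5 ≤ k) (hk' : k ≤ 21868) :
    ∃ Y, Y + f k ^ 2 ≤ (k + 1) * (f k + 1) ∧ k + f k ≤ π Y + 3 := by
  refine exists_le_primeCounting_of_checkTable (n := 2) (c := 2) (rows :=
    [(3, 6), (4, 8), (4, 10), (4, 13), (4, 15), (5, 19), (5, 23), (5, 28), (5, 34), (5, 37),
    (6, 45), (6, 55), (6, 66), (6, 79), (6, 93), (7, 120), (7, 150), (7, 185), (7, 221), (7, 232),
    (8, 270), (8, 315), (8, 365), (8, 418), (8, 479), (8, 546), (8, 576), (9, 674), (9, 784),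
    (9, 909), (9, 1045), (9, 1196), (9, 1349), (9, 1430), (10, 1663), (10, 1923), (10, 2207),
    (10, 2530), (10, 2865), (10, 3222), (10, 3549), (11, 4226), (11, 4972), (11, 5802), (11, 6683),
    (11, 7623), (11, 8616), (11, 8810), (12, 9758), (12, 10817), (12, 11986), (12, 13269),
    (12, 14635), (12, 16113), (12, 17683), (12, 19351), (12, 21092), (12, 21868)])
    (by decide +kernel) (by norm_num) (by norm_num) (by decide) hk hk'

/-! ### The size of the logarithm -/

lemma nthPrime_le {n Y : ℕ} (hn : 1 ≤ n) (h : n ≤ π Y) : nthPrime n ≤ Y :=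
  Nat.lt_succ_iff.1 <| Nat.nth_lt_of_lt_count <| show n - 1 < π Y by omega

lemma one_le_nthPrime (n : ℕ) : 1 ≤ nthPrime n := (Nat.prime_nth_prime _).one_lt.le

lemma abs_sq_sub_self_lt_sq {x y : ℝ} (hx : 0 ≤ x) (hxy : x < y) (hy : 1 ≤ y) :
    |x ^ 2 - x| < y ^ 2 := by
  rw [abs_lt]
  constructor <;> nlinarith

lemma le_three_pow_f (k : ℕ) : k ≤ 3 ^ f k := by
  obtain rfl | hk := k.eq_zero_or_pos
  · exact Nat.zero_le _
  have hk0 : (0 : ℝ) < k := by exact_mod_cast hk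
  have hlog : Real.log k ≤ Real.log (3 ^ f k) := by
    calc Real.log k ≤ Real.log (2.5 * k) := Real.log_le_log hk0 (by linarith)
      _ ≤ 10 / 11 * f k := log_five_halves_mul_le k
      _ ≤ f k * Real.log 3 := by
        nlinarith [Real.log_three_gt_d9, Nat.cast_nonneg (α := ℝ) (f k)]
      _ = Real.log (3 ^ f k) := (Real.log_pow _ _).symm
  exact_mod_cast (Real.log_le_log_iff hk0 (by positivity)).1 hlog

lemma succ_mul_f_add_one_lt_ten_pow {k : ℕ} (hk : 2 ≤ k) : (k + 1) * (f k + 1) < 10 ^ f k := by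
  have hk3 := le_three_pow_f k
  have hf : f k ≠ 0 := fun hf ↦ by
    rw [hf] at hk3
    omega
  have hk4 : k + 1 ≤ 4 ^ f k := hk3.trans_lt (Nat.pow_lt_pow_left (by norm_num) hf)
  calc (k + 1) * (f k + 1) ≤ 4 ^ f k * 2 ^ f k := Nat.mul_le_mul hk4 Nat.lt_two_pow_self
    _ = 8 ^ f k := (Nat.mul_pow 4 2 _).symm
    _ < 10 ^ f k := Nat.pow_lt_pow_left (by norm_num) hf

lemma abs_logb_sq_sub_logb_lt {k Y : ℕ} (hk : 3 ≤ k)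
    (hY : Y + f k ^ 2 ≤ (k + 1) * (f k + 1)) (hπ : k + f k ≤ π Y + 3) :
    |(Real.logb 10 (nthPrime (f k + k - 3))) ^ 2 - Real.logb 10 (nthPrime (f k + k - 3))| <
      ((k : ℝ) + 1) * ((f k : ℝ) + 1) - (nthPrime (f k + k - 3) : ℝ) := by
  have hlt := succ_mul_f_add_one_lt_ten_pow (show 2 ≤ k by omega)
  have hf : 1 ≤ f k := Nat.one_le_iff_ne_zero.2 fun hf ↦ by
    rw [hf] at hlt
    omega
  have hPY : nthPrime (f k + k - 3) ≤ Y := nthPrime_le (by omega) (by omega)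
  have hP : (1 : ℝ) ≤ nthPrime (f k + k - 3) := by exact_mod_cast one_le_nthPrime _
  generalize nthPrime (f k + k - 3) = p at *
  have hlog : Real.logb 10 p < f k := by
    rw [Real.logb_lt_iff_lt_rpow (by norm_num) (by linarith), Real.rpow_natCast]
    exact_mod_cast (show p < 10 ^ f k by omega)
  have hp : (p : ℝ) + (f k : ℝ) ^ 2 ≤ (k + 1) * (f k + 1) := by
    exact_mod_cast (show p + f k ^ 2 ≤ (k + 1) * (f k + 1) by omega)
  have := abs_sq_sub_self_lt_sq (Real.logb_nonneg (by norm_num) hP) hlog (by exact_mod_cast hf)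
  linarith

lemma abs_logb_sq_sub_logb_lt_of_le_primeCounting_mul {k : ℕ} (hk : 3 ≤ k)
    (hπ : k + f k ≤ π ((f k + 1) * (k - f k))) :
    |(Real.logb 10 (nthPrime (f k + k - 3))) ^ 2 - Real.logb 10 (nthPrime (f k + k - 3))| <
      ((k : ℝ) + 1) * ((f k : ℝ) + 1) - (nthPrime (f k + k - 3) : ℝ) := by
  have hfk : f k ≤ k := by
    by_contra! h
    rw [Nat.sub_eq_zero_of_le h.le, mul_zero, Nat.primeCounting_zero] at hπ
    omega
  obtain ⟨j, hj⟩ := Nat.exists_eq_add_of_le hfk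
  refine abs_logb_sq_sub_logb_lt hk (Y := (f k + 1) * (k - f k)) ?_ (by omega)
  rw [show k - f k = j by omega]
  nlinarith

/-- Lemma 1: for all `k ≥ 5`,
`|(log p_{f(k)+k-3})² - log p_{f(k)+k-3}| < (k+1)(f(k)+1) - p_{f(k)+k-3}`,
where `log` is the base-10 logarithm. -/
theorem lemma_one (k : ℕ) (hk : 5 ≤ k) :
    |(Real.logb 10 (nthPrime (f k + k - 3)))^2 - Real.logb 10 (nthPrime (f k + k - 3))| <
      ((k : ℝ) + 1) * ((f k : ℝ) + 1) - (nthPrime (f k + k - 3) : ℝ) := by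
  rcases le_or_gt k 21868 with hsmall | hlarge
  · obtain ⟨Y, hY, hπ⟩ := exists_le_primeCounting_of_le_21868 hk hsmall
    exact abs_logb_sq_sub_logb_lt (by omega) hY hπ
  · exact abs_logb_sq_sub_logb_lt_of_le_primeCounting_mul (by omega)
      (add_f_le_primeCounting_mul_sub hlarge)
end

section
/- For every integer n ≥ 5, the inequality (2n/9 + 4) · (log(n · ln(n · ln n)))² > n holds, where ln denotes the natural logarithm and log denotes the base-10 logarithm. -/
/-!
For `x ≥ 5` one has `ln (x ln x) ≥ 2`, so it is enough to show
`log (2x) > √(9x / (2(x + 18)))`, the square root of `x / (2x/9 + 4)`. At `x = 5` the left side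
is `1` and the right side `√(45/46)`. The difference of the two sides increases: by AM-GM,
`x` times the derivative of the right side is at most `1/√6`, attained at `x = 9`, whereas for
the left side it is `1 / ln 10`, and `(ln 10)² < 6`.
-/

open Set

lemma twentySeven_mul_sq_mul_le_four_mul_add_pow_three {a x : ℝ} (ha : 0 ≤ a) (hx : 0 ≤ x) :
    27 * (a ^ 2 * x) ≤ 4 * (x + a) ^ 3 := by
  have factored : 0 ≤ (2 * x - a) ^ 2 * (x + 4 * a) := by positivity
  linarith

lemma hasDerivAt_sqrt_div_add {a x : ℝ} (hx : x ≠ 0) (hxa : x + a ≠ 0) :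
    HasDerivAt (fun y ↦ √(y / (y + a))) (a / (x + a) ^ 2 / (2 * √(x / (x + a)))) x := by
  have quotient : HasDerivAt (fun y ↦ y / (y + a)) (a / (x + a) ^ 2) x :=
    ((hasDerivAt_id' x).fun_div ((hasDerivAt_id' x).add_const a) hxa).congr_deriv (by ring)
  exact quotient.sqrt (div_ne_zero hx hxa)

lemma mul_deriv_sqrt_div_add_le_inv {a c x : ℝ} (ha : 0 ≤ a) (hc : c ^ 2 ≤ 27) (hx : 0 < x) :
    c * (a / (x + a) ^ 2 / (2 * √(x / (x + a)))) ≤ x⁻¹ := by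
  have : 0 < x + a := by positivity
  have mul_le_sqrt : c * a * x / (2 * (x + a) ^ 2) ≤ √(x / (x + a)) := by
    apply Real.le_sqrt_of_sq_le
    have amgm : c ^ 2 * (a ^ 2 * x) ≤ 4 * (x + a) ^ 3 := calc
      c ^ 2 * (a ^ 2 * x) ≤ 27 * (a ^ 2 * x) := by gcongr
      _ ≤ 4 * (x + a) ^ 3 := twentySeven_mul_sq_mul_le_four_mul_add_pow_three ha hx.le
    calc (c * a * x / (2 * (x + a) ^ 2)) ^ 2
        = c ^ 2 * (a ^ 2 * x) * (x / (4 * (x + a) ^ 4)) := by field_simp; norm_num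
      _ ≤ 4 * (x + a) ^ 3 * (x / (4 * (x + a) ^ 4)) := by gcongr
      _ = x / (x + a) := by field_simp
  have : 0 < √(x / (x + a)) := by positivity
  calc c * (a / (x + a) ^ 2 / (2 * √(x / (x + a))))
      = c * a * x / (2 * (x + a) ^ 2) / (x * √(x / (x + a))) := by field_simp
    _ ≤ √(x / (x + a)) / (x * √(x / (x + a))) := by gcongr
    _ = x⁻¹ := by field_simp

lemma monotoneOn_log_sub_mul_sqrt_div_add {a c : ℝ} (ha : 0 ≤ a) (hc : c ^ 2 ≤ 27) :
    MonotoneOn (fun x ↦ Real.log x - c * √(x / (x + a))) (Ioi 0) := by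
  have hasDerivAt_diff : ∀ x ∈ Ioi (0 : ℝ),
      HasDerivAt (fun x ↦ Real.log x - c * √(x / (x + a)))
        (x⁻¹ - c * (a / (x + a) ^ 2 / (2 * √(x / (x + a))))) x := fun x hx ↦
    (Real.hasDerivAt_log hx.ne').sub
      ((hasDerivAt_sqrt_div_add hx.ne' (add_pos_of_pos_of_nonneg hx ha).ne').const_mul c)
  refine monotoneOn_of_hasDerivWithinAt_nonneg (convex_Ioi 0)
    (fun x hx ↦ (hasDerivAt_diff x hx).continuousAt.continuousWithinAt)
    (fun x hx ↦ (hasDerivAt_diff x (interior_subset hx)).hasDerivWithinAt) fun x hx ↦ ?_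
  exact sub_nonneg.2 (mul_deriv_sqrt_div_add_le_inv ha hc (interior_subset hx))

lemma log_ten_le_twelve_div_five : Real.log 10 ≤ 12 / 5 := by
  have pow_le : (10 : ℝ) ^ 5 ≤ Real.exp 12 := calc
    (10 : ℝ) ^ 5 ≤ 2.7182818283 ^ 12 := by norm_num
    _ ≤ Real.exp 1 ^ 12 := by gcongr; exact Real.exp_one_gt_d9.le
    _ = Real.exp 12 := by rw [Real.exp_one_pow]; norm_num
  have log_pow_le := (Real.log_le_iff_le_exp (by positivity)).2 pow_le
  rw [Real.log_pow] at log_pow_le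
  push_cast at log_pow_le
  linarith

lemma three_div_two_le_log_five : 3 / 2 ≤ Real.log 5 := by
  have le_pow : Real.exp 3 ≤ 5 ^ 2 := calc
    Real.exp 3 = Real.exp 1 ^ 3 := by rw [Real.exp_one_pow]; norm_num
    _ ≤ 2.7182818286 ^ 3 := by gcongr; exact Real.exp_one_lt_d9.le
    _ ≤ 5 ^ 2 := by norm_num
  have le_log_pow := (Real.le_log_iff_exp_le (by positivity)).2 le_pow
  rw [Real.log_pow] at le_log_pow
  push_cast at le_log_pow
  linarith

lemma two_le_log_mul_log {x : ℝ} (hx : 5 ≤ x) : 2 ≤ Real.log (x * Real.log x) := by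
  have log_ge : 3 / 2 ≤ Real.log x :=
    three_div_two_le_log_five.trans (Real.log_le_log (by norm_num) hx)
  rw [Real.le_log_iff_exp_le (by positivity)]
  calc Real.exp 2 = Real.exp 1 ^ 2 := by rw [Real.exp_one_pow]; norm_num
    _ ≤ 2.7182818286 ^ 2 := by gcongr; exact Real.exp_one_lt_d9.le
    _ ≤ 5 * (3 / 2) := by norm_num
    _ ≤ x * Real.log x := by gcongr

lemma sqrt_lt_logb_ten_two_mul {x : ℝ} (hx : 5 ≤ x) :
    √(9 / 2) * √(x / (x + 18)) < Real.logb 10 (2 * x) := by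
  have log_ten_pos : 0 < Real.log 10 := Real.log_pos (by norm_num)
  have coeff_sq_le : (Real.log 10 * √(9 / 2)) ^ 2 ≤ 27 := calc
    (Real.log 10 * √(9 / 2)) ^ 2 = Real.log 10 ^ 2 * (9 / 2) := by
      rw [mul_pow, Real.sq_sqrt (by norm_num)]
    _ ≤ (12 / 5) ^ 2 * (9 / 2) := by gcongr; exact log_ten_le_twelve_div_five
    _ ≤ 27 := by norm_num
  have increasing : Real.log 5 - Real.log 10 * √(9 / 2) * √(5 / (5 + 18)) ≤
      Real.log x - Real.log 10 * √(9 / 2) * √(x / (x + 18)) :=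
    monotoneOn_log_sub_mul_sqrt_div_add (by norm_num) coeff_sq_le
      (mem_Ioi.2 (by norm_num)) (mem_Ioi.2 (by linarith)) hx
  have at_five : √(9 / 2) * √(5 / (5 + 18)) < 1 := by
    rw [← Real.sqrt_mul (by norm_num), Real.sqrt_lt' one_pos]
    norm_num
  have log_two_mul : Real.log (2 * x) = Real.log 10 + (Real.log x - Real.log 5) := by
    rw [← Real.log_div (by linarith) (by norm_num), ← Real.log_mul (by norm_num) (by positivity)]
    ring_nf
  rw [Real.logb, lt_div_iff₀ log_ten_pos, log_two_mul]
  linarith [mul_lt_mul_of_pos_left at_five log_ten_pos]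

lemma lt_mul_sq_logb_ten_two_mul {x : ℝ} (hx : 5 ≤ x) :
    x < (2 * x / 9 + 4) * Real.logb 10 (2 * x) ^ 2 := by
  have : 0 < x + 18 := by linarith
  calc x = (2 * x / 9 + 4) * (√(9 / 2) * √(x / (x + 18))) ^ 2 := by
        rw [mul_pow, Real.sq_sqrt (by positivity), Real.sq_sqrt (by positivity)]
        field_simp
        ring
    _ < (2 * x / 9 + 4) * Real.logb 10 (2 * x) ^ 2 := by
        gcongr
        exact sqrt_lt_logb_ten_two_mul hx

theorem lemma_three_general (x : ℝ) (hx : 5 ≤ x) :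
    (2 * x / 9 + 4) * (Real.logb 10 (x * Real.log (x * Real.log x))) ^ 2 > x := by
  have logb_le : Real.logb 10 (2 * x) ≤ Real.logb 10 (x * Real.log (x * Real.log x)) := by
    apply Real.logb_le_logb_of_le (by norm_num) (by positivity)
    rw [mul_comm]
    gcongr
    exact two_le_log_mul_log hx
  have logb_nonneg : 0 ≤ Real.logb 10 (2 * x) := Real.logb_nonneg (by norm_num) (by linarith)
  calc x < (2 * x / 9 + 4) * Real.logb 10 (2 * x) ^ 2 := lt_mul_sq_logb_ten_two_mul hx
    _ ≤ (2 * x / 9 + 4) * (Real.logb 10 (x * Real.log (x * Real.log x))) ^ 2 := by gcongr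

/-- Lemma 3: for every integer `n ≥ 5`,
`(2n/9 + 4) · (log(n · ln(n · ln n)))² > n`, where `ln` is the natural
logarithm and `log` is the base-10 logarithm. -/
theorem lemma_three (n : ℕ) (hn : 5 ≤ n) :
    (2 * (n : ℝ) / 9 + 4) *
      (Real.logb 10 ((n : ℝ) * Real.log ((n : ℝ) * Real.log n)))^2 > (n : ℝ) :=
  lemma_three_general n (by exact_mod_cast hn)
end
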